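/- Let q = p be a prime, let s ≠ 1 be such that s is not a multiple of q, and let h ≥ 2. If there exists a generalized Hadamard matrix H(q,s), then there exists a GH code C_H of length n = q^h·s over 𝔽_q with ker(C_H) = k if and only if k ∈ {1, 2, …, h}. -/

import Mathlib

open Finset

/-- `H` is a generalized Hadamard matrix with parameter `lam`: for every pair of
distinct rows, the multiset of coordinatewise differences contains every element
of `F` exactly `lam` times. -/
def IsGH {F : Type*} [Fintype F] [DecidableEq F] [Sub F]
    {ι : Type*} [Fintype ι] (lam : ℕ) (H : Matrix ι ι F) : Prop :=
  ∀ i j : ι, i ≠ j → ∀ a : F,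
    (Finset.univ.filter (fun s => H i s - H j s = a)).card = lam

/-- A matrix is normalized if its first row and first column are all zeros. -/
def Normalized {F : Type*} [Zero F] {n : ℕ} (H : Matrix (Fin n) (Fin n) F) : Prop :=
  ∀ i s : Fin n, (i.val = 0 ∨ s.val = 0) → H i s = 0

/-- The code `F_H` whose codewords are the rows of `H`. -/
def rowSet {F ι : Type*} (H : Matrix ι ι F) : Set (ι → F) :=
  Set.range (fun i => H i)

/-- The GH code `C_H = ⋃_{α ∈ F} (F_H + α·𝟏)`. -/
def ghCode {F ι : Type*} [Add F] (H : Matrix ι ι F) : Set (ι → F) :=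
  {v | ∃ (α : F) (i : ι), v = fun s => H i s + α}

/-- The rank of a code: the dimension of its linear span. -/
noncomputable def rankC {F ι : Type*} [Field F] (C : Set (ι → F)) : ℕ :=
  Module.finrank F (Submodule.span F C)

/-- The kernel `K(C) = {x : αx + C = C for all α}` of a code. -/
def kerSet {F ι : Type*} [Mul F] [Add F] (C : Set (ι → F)) : Set (ι → F) :=
  {x | ∀ α : F, (fun c => (fun i => α * x i) + c) '' C = C}

/-- The dimension of the kernel of a code. -/
noncomputable def kerDim {F ι : Type*} [Field F] (C : Set (ι → F)) : ℕ :=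
  Module.finrank F (Submodule.span F (kerSet C))

/-- The `p`-kernel `K_p(C) = {x : x + C = C}` of a code. -/
def pKerSet {F ι : Type*} [Add F] (C : Set (ι → F)) : Set (ι → F) :=
  {x | (fun c => x + c) '' C = C}

/-- The Euclidean orthogonal code `C^⊥`. -/
def dualSet {F ι : Type*} [CommRing F] [Fintype ι] (C : Set (ι → F)) : Set (ι → F) :=
  {v | ∀ w ∈ C, ∑ i, v i * w i = 0}

/-- Two matrices are translation equivalent if the rows of one are obtained from the
rows of the other by adding a fixed vector. -/
def TransEquiv {F ι : Type*} [Add F] (B B' : Matrix ι ι F) : Prop :=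
  ∃ v : ι → F, rowSet B' = (fun b => v + b) '' rowSet B

/-- The Kronecker sum `H₁ ⊕ H₂`. -/
def kroneckerSum {F ι κ : Type*} [Add F] (H₁ : Matrix ι ι F) (H₂ : Matrix κ κ F) :
    Matrix (ι × κ) (ι × κ) F :=
  fun p r => H₁ p.1 r.1 + H₂ p.2 r.2

/-- The Kronecker sum `H₁ ⊕ [B₁, …, Bₙ]`, whose `(i,j)` block is `h_{ij} + B_i`. -/
def kroneckerSumFam {F ι κ : Type*} [Add F] (H₁ : Matrix ι ι F) (B : ι → Matrix κ κ F) :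
    Matrix (ι × κ) (ι × κ) F :=
  fun p r => H₁ p.1 r.1 + B p.1 p.2 r.2

/-- The multiplicative-table matrix `S_q` of a field. -/
def mulTable (F : Type*) [Mul F] : Matrix F F F := fun i j => i * j

/-- A code is `K`-additive, for a subfield `K`, if it is a linear space over `K`. -/
def IsAdditiveOver {F ι : Type*} [Field F] (K : Subfield F) (C : Set (ι → F)) : Prop :=
  (0 : ι → F) ∈ C ∧ (∀ x ∈ C, ∀ y ∈ C, x + y ∈ C) ∧
    ∀ (a : K), ∀ x ∈ C, (fun i => (a : F) * x i) ∈ C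

/-!
Let `K` be the kernel of `C_H`, let `q = |F|` and let `n` be the length. Differences of codewords
are constant or equidistributed, so the subspace `V ⊆ K` of words vanishing at one fixed coordinate
consists of `0` and equidistributed words. If `C_H` is not a single coset of `K`, some coset of `V`
consists of equidistributed words, and counting zeros over `V` and over this coset shows that
`q * |V| = q ^ dim K` divides `n`. Otherwise `q ^ dim K = q * n`. For `n = q ^ h * s` with `q ∤ s`
and `s ≠ 1` both cases force `dim K ≤ h`.

The dimensions `1, …, h` are realized by iterating `S_q ⊕ [B_0, …, B_{q-1}]` from a matrix whose
kernel dimension is `1` by this bound. Equal blocks raise the dimension by one. If no translate of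
`C_{B_0}` lies in `C_{B_1}`, every kernel word repeats one word of `K(C_{B_0})` in all blocks, so
the dimension stays `1`. For this it suffices to swap two columns in the blocks other than `B_0`,
chosen such that each difference of two among some three rows takes distinct values at them. Such
columns exist for `3 ≤ q`; for `q = 2` the length would be divisible by `4`, contradicting `q ∤ s`.
-/

/-- A word of length `|ι|` is equidistributed if every symbol occurs in it exactly `lam` times. The
differences of distinct rows of a GH matrix are the words of this kind. -/
def Equidistributed {F ι : Type*} [DecidableEq F] [Fintype ι] (lam : ℕ) (v : ι → F) : Prop :=
  ∀ a : F, #{i | v i = a} = lam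

namespace Equidistributed

variable {F ι : Type*} [DecidableEq F] [Fintype ι] {lam : ℕ} {v w : ι → F}

theorem const_add [AddGroup F] (hv : Equidistributed lam v) (a : F) :
    Equidistributed lam (Function.const ι a + v) := fun b => by
  simpa only [Pi.add_apply, Function.const_apply, ← eq_neg_add_iff_add_eq] using hv (-a + b)

theorem const_smul [Field F] (hv : Equidistributed lam v) {a : F} (ha : a ≠ 0) :
    Equidistributed lam (a • v) := fun b => by
  simpa only [Pi.smul_apply, smul_eq_mul, ← eq_inv_mul_iff_mul_eq₀ ha] using hv (a⁻¹ * b)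

theorem comp_equiv {κ : Type*} [Fintype κ] (hv : Equidistributed lam v) (e : κ ≃ ι) :
    Equidistributed lam (v ∘ e) := fun a => by
  rw [← hv a]
  exact card_equiv e (by simp)

theorem card_eq [Fintype F] (hv : Equidistributed lam v) :
    Fintype.card ι = Fintype.card F * lam := by
  rw [← card_univ, card_eq_sum_card_fiberwise (f := v) (t := univ) (by simp),
    sum_congr rfl fun a _ => hv a, sum_const, card_univ, smul_eq_mul]

theorem notMem_range_const [Nontrivial F] [Nonempty ι] (hv : Equidistributed lam v) :
    v ∉ Set.range (Function.const ι) := by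
  rintro ⟨a, rfl⟩
  obtain ⟨b, hb⟩ := exists_ne a
  have hlam : lam = 0 := by simpa [hb.symm] using (hv b).symm
  simpa [hlam] using hv a

end Equidistributed

section LinearEncoding

variable {F V ι : Type*} [Field F] [Fintype F] [DecidableEq F] [AddCommGroup V] [Module F V]
  [Fintype V] [Fintype ι]

theorem card_mul_card_fiber_of_ne_zero {φ : V →ₗ[F] F} (hφ : φ ≠ 0) (c : F) :
    Fintype.card F * #{v | φ v = c} = Fintype.card V := by
  have hfiber (b : F) : #{v | φ v = b} = #{v | φ v = c} :=
    AddMonoidHom.card_fiber_eq_of_mem_range φ (LinearMap.surjective hφ b)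
      (LinearMap.surjective hφ c)
  rw [← card_univ (α := V),
    card_eq_sum_card_fiberwise (s := univ) (f := φ) (t := univ) (by simp),
    sum_congr rfl fun b _ => hfiber b, sum_const, card_univ, smul_eq_mul]

-- A coordinate functional `v ↦ f v j` is zero or takes every value equally often.
theorem card_mul_sum_card_zeros_add (f : V →ₗ[F] ι → F) (y : ι → F) :
    Fintype.card F * ∑ v, #{j | (y + f v) j = 0} + Fintype.card V * #{j | ∀ v, f v j = 0} =
      Fintype.card F * Fintype.card V * #{j | (∀ v, f v j = 0) ∧ y j = 0} +
        Fintype.card V * Fintype.card ι := by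
  have hswap : ∑ v, #{j | (y + f v) j = 0} = ∑ j, #{v | f v j = -y j} := by
    simp only [card_filter, Pi.add_apply, eq_neg_iff_add_eq_zero, add_comm (y _)]
    exact sum_comm
  have hcol (j : ι) :
      Fintype.card F * #{v | f v j = -y j} + Fintype.card V * (if ∀ v, f v j = 0 then 1 else 0) =
        Fintype.card F * Fintype.card V * (if (∀ v, f v j = 0) ∧ y j = 0 then 1 else 0) +
          Fintype.card V := by
    by_cases hj : ∀ v, f v j = 0
    · by_cases hy : y j = 0 <;> simp [hj, hy, eq_comm]
    · have hφ : LinearMap.proj j ∘ₗ f ≠ 0 := fun h => hj fun v => LinearMap.congr_fun h v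
      rw [if_neg hj, if_neg fun h => hj h.1, mul_zero, mul_zero, add_zero, zero_add]
      exact card_mul_card_fiber_of_ne_zero hφ (-y j)
  have hsum := sum_congr (rfl : (univ : Finset ι) = univ) fun j _ => hcol j
  simp only [sum_add_distrib, ← mul_sum, ← card_filter, sum_const, card_univ, smul_eq_mul]
    at hsum
  rw [hswap, hsum, mul_comm (Fintype.card ι)]

theorem card_mul_card_common_zeros {lam : ℕ} (f : V →ₗ[F] ι → F)
    (hn : Fintype.card ι = Fintype.card F * lam) (hf : ∀ v ≠ 0, Equidistributed lam (f v)) :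
    Fintype.card V * #{j | ∀ v, f v j = 0} = Fintype.card ι := by
  classical
  have hzeros : ∑ v, #{j | ((0 : ι → F) + f v) j = 0} =
      Fintype.card ι + (Fintype.card V - 1) * lam := by
    rw [← add_sum_erase univ _ (mem_univ (0 : V)), sum_congr rfl fun v hv => by
      rw [zero_add, hf v (ne_of_mem_erase hv)]]
    simp
  have hcount := card_mul_sum_card_zeros_add f 0
  rw [hzeros] at hcount
  simp only [Pi.zero_apply, and_true] at hcount
  obtain ⟨q, hq⟩ : ∃ q, Fintype.card F = q + 2 :=
    Nat.exists_eq_add_of_le' Fintype.one_lt_card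
  obtain ⟨m, hm⟩ : ∃ m, Fintype.card V = m + 1 :=
    Nat.exists_eq_add_of_le' Fintype.card_pos
  rw [hq] at hn
  rw [hq, hm, Nat.add_sub_cancel] at hcount
  rw [hm]
  refine Nat.eq_of_mul_eq_mul_left q.succ_pos ?_
  zify at hn hcount ⊢
  linear_combination -hcount - m * hn

-- The common zeros of the words `f v` form a fraction `1 / |V|` of the coordinates, and the coset
-- forces a fraction `1 / |F|` of them to be zeros of `x`.
theorem card_mul_card_dvd_of_equidistributed {lam : ℕ} (f : V →ₗ[F] ι → F) (x : ι → F)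
    (hf : ∀ v ≠ 0, Equidistributed lam (f v)) (hx : ∀ v, Equidistributed lam (x + f v)) :
    Fintype.card F * Fintype.card V ∣ Fintype.card ι := by
  have hn : Fintype.card ι = Fintype.card F * lam := (hx 0).card_eq
  have hZ := card_mul_card_common_zeros f hn hf
  have hcount := card_mul_sum_card_zeros_add f x
  rw [sum_congr rfl fun v _ => hx v 0, sum_const, card_univ, smul_eq_mul, hZ] at hcount
  refine ⟨#{j | (∀ v, f v j = 0) ∧ x j = 0}, ?_⟩
  zify at hn hcount ⊢
  linear_combination hcount + (Fintype.card V : ℤ) * hn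

end LinearEncoding

section Pair

variable {F ι : Type*} [DecidableEq F] [Fintype ι] {lam : ℕ} {a b : ι} {u v w : ι → F}

theorem Equidistributed.apply_eq_of_eqOn_compl_pair (hv : Equidistributed lam v)
    (hw : Equidistributed lam w) (hvw : Set.EqOn v w {a, b}ᶜ) (hne : v a ≠ w a) :
    v b = w a := by
  by_contra hb
  have hsub : ({i | v i = w a} : Finset ι) ⊂ ({i | w i = w a} : Finset ι) := by
    refine (Finset.ssubset_iff_of_subset fun i hi => ?_).2 ⟨a, by simp, by simpa using hne⟩
    simp only [mem_filter_univ] at hi ⊢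
    have hi' : i ∈ ({a, b} : Set ι)ᶜ := by
      rintro (rfl | rfl)
      exacts [hne hi, hb hi]
    rw [← hvw hi', hi]
  exact (card_lt_card hsub).ne ((hv _).trans (hw _).symm)

theorem eq_const_of_eqOn_compl_pair (hlam : lam + 2 < Fintype.card ι) {c : F}
    (hwc : Set.EqOn w (Function.const ι c) {a, b}ᶜ)
    (hw : w ∈ Set.range (Function.const ι) ∨ Equidistributed lam w) :
    w = Function.const ι c := by
  classical
  have hsub : ({a, b} : Finset ι)ᶜ ⊆ ({i | w i = c} : Finset ι) := fun i hi => by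
    simpa using hwc (by simpa using hi)
  have hle : Fintype.card ι - 2 ≤ #{i | w i = c} :=
    (Nat.sub_le_sub_left card_le_two _).trans ((card_compl _).symm.le.trans (card_le_card hsub))
  obtain ⟨d, rfl⟩ | hw := hw
  · obtain ⟨i, hi⟩ := card_pos.1 (show 0 < #{i | Function.const ι d i = c} by omega)
    rw [show d = c from (mem_filter_univ i).1 hi]
  · rw [hw c] at hle
    omega

theorem apply_eq_of_eqOn_compl_pair (hlam : lam + 2 < Fintype.card ι)
    (huv : Set.EqOn u v {a, b}ᶜ) (huw : Set.EqOn u w {a, b}ᶜ)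
    (hu : u ∈ Set.range (Function.const ι) ∨ Equidistributed lam u)
    (hv : v ∈ Set.range (Function.const ι) ∨ Equidistributed lam v)
    (hw : w ∈ Set.range (Function.const ι) ∨ Equidistributed lam w)
    (huv_ne : u a ≠ v a) (huw_ne : u a ≠ w a) : v a = w a := by
  have hconst {x y : ι → F} (hxy : Set.EqOn x y {a, b}ᶜ) (hne : x a ≠ y a)
      (hy : y ∈ Set.range (Function.const ι) ∨ Equidistributed lam y) :
      x ∉ Set.range (Function.const ι) := by
    rintro ⟨c, rfl⟩
    exact hne (congrFun (eq_const_of_eqOn_compl_pair hlam hxy.symm hy) a).symm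
  have hu' := hu.resolve_left (hconst huv huv_ne hv)
  have hv' := hv.resolve_left (hconst huv.symm huv_ne.symm hu)
  have hw' := hw.resolve_left (hconst huw.symm huw_ne.symm hu)
  rw [← hu'.apply_eq_of_eqOn_compl_pair hv' huv huv_ne,
    ← hu'.apply_eq_of_eqOn_compl_pair hw' huw huw_ne]

end Pair

open scoped Pointwise

section Kernel

variable {R V W : Type*} [Ring R] [AddCommGroup V] [Module R V] [AddCommGroup W] [Module R W]

variable (R) in
/-- The kernel `K(C) = {x : αx + C = C for all α}` of a code as a submodule. Inclusion
`αx + C ⊆ C` for all `α` suffices, since `-α` gives the reverse one. -/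
def codeKernel (C : Set V) : Submodule R V where
  carrier := {x | ∀ α : R, ∀ c ∈ C, α • x + c ∈ C}
  zero_mem' α c hc := by simpa only [smul_zero, zero_add] using hc
  add_mem' {x y} hx hy α c hc := by
    rw [smul_add, add_assoc]
    exact hx α _ (hy α c hc)
  smul_mem' β x hx α c hc := by
    rw [smul_smul]
    exact hx _ c hc

theorem mem_codeKernel {C : Set V} {x : V} :
    x ∈ codeKernel R C ↔ ∀ α : R, ∀ c ∈ C, α • x + c ∈ C :=
  Iff.rfl

theorem add_mem_of_mem_codeKernel {C : Set V} {x c : V} (hx : x ∈ codeKernel R C) (hc : c ∈ C) :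
    x + c ∈ C := by
  simpa only [one_smul] using hx 1 c hc

theorem codeKernel_vadd (v : V) (C : Set V) : codeKernel R (v +ᵥ C) = codeKernel R C := by
  ext x
  simp only [mem_codeKernel, Set.mem_vadd_set, vadd_eq_add, forall_exists_index, and_imp,
    forall_apply_eq_imp_iff₂, add_left_comm _ v, add_right_inj, exists_eq_right]

theorem codeKernel_image_of_injective {f : V →ₗ[R] W} (hf : Function.Injective f) {C : Set V}
    (hC : C.Nonempty) : codeKernel R (f '' C) = (codeKernel R C).map f := by
  ext x
  rw [Submodule.mem_map]
  constructor
  · intro hx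
    obtain ⟨c, hc⟩ := hC
    obtain ⟨d, -, hd⟩ := add_mem_of_mem_codeKernel hx (Set.mem_image_of_mem f hc)
    obtain rfl : x = f (d - c) := by rw [map_sub, hd, add_sub_cancel_right]
    refine ⟨d - c, fun α b hb => ?_, rfl⟩
    simpa only [← map_smul, ← map_add, hf.mem_set_image] using hx α _ (Set.mem_image_of_mem f hb)
  · rintro ⟨y, hy, rfl⟩ α _ ⟨b, hb, rfl⟩
    exact ⟨α • y + b, hy α b hb, by rw [map_add, map_smul]⟩

end Kernel

section KerDim

variable {F V ι : Type*} [Field F] [AddCommGroup V] [Module F V]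

theorem kerSet_eq_codeKernel (C : Set (ι → F)) : kerSet C = codeKernel F C := by
  ext x
  refine ⟨fun hx α c hc => (hx α).subset ⟨c, hc, rfl⟩, fun hx α => ?_⟩
  refine Set.Subset.antisymm (Set.image_subset_iff.2 (hx α)) fun c hc => ?_
  refine ⟨(-α) • x + c, hx _ c hc, ?_⟩
  simp only [neg_smul]
  exact add_neg_cancel_left (α • x) c

theorem kerDim_eq_finrank_codeKernel (C : Set (ι → F)) :
    kerDim C = Module.finrank F (codeKernel F C) := by
  rw [kerDim, kerSet_eq_codeKernel, Submodule.span_eq]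

theorem card_codeKernel_eq_pow_kerDim [Fintype F] [Finite ι] (C : Set (ι → F)) :
    Nat.card (codeKernel F C) = Fintype.card F ^ kerDim C := by
  rw [kerDim_eq_finrank_codeKernel, Module.natCard_eq_pow_finrank (K := F),
    Nat.card_eq_fintype_card]

theorem kerDim_vadd (v : ι → F) (C : Set (ι → F)) : kerDim (v +ᵥ C) = kerDim C := by
  rw [kerDim_eq_finrank_codeKernel, codeKernel_vadd, kerDim_eq_finrank_codeKernel]

theorem kerDim_image_of_injective {f : V →ₗ[F] ι → F} (hf : Function.Injective f) {C : Set V}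
    (hC : C.Nonempty) : kerDim (f '' C) = Module.finrank F (codeKernel F C) := by
  rw [kerDim_eq_finrank_codeKernel, codeKernel_image_of_injective hf hC,
    (Submodule.equivMapOfInjective f hf _).finrank_eq]

end KerDim

section GHCode

variable {F ι κ : Type*}

theorem row_mem_ghCode [AddZeroClass F] (H : Matrix ι ι F) (i : ι) : H i ∈ ghCode H :=
  ⟨0, i, by simp only [add_zero]⟩

theorem ghCode_nonempty [AddZeroClass F] [Nonempty ι] (H : Matrix ι ι F) : (ghCode H).Nonempty :=
  ⟨_, row_mem_ghCode H (Classical.arbitrary ι)⟩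

variable [Field F]

theorem const_mem_codeKernel_ghCode (H : Matrix ι ι F) (a : F) :
    Function.const ι a ∈ codeKernel F (ghCode H) := by
  rintro α _ ⟨β, i, rfl⟩
  refine ⟨α * a + β, i, funext fun t => ?_⟩
  simp only [Pi.add_apply, Pi.smul_apply, Function.const_apply, smul_eq_mul]
  ring

theorem one_le_kerDim_ghCode [Finite ι] [Nonempty ι] (H : Matrix ι ι F) :
    1 ≤ kerDim (ghCode H) := by
  rw [kerDim_eq_finrank_codeKernel, Nat.one_le_iff_ne_zero, ← Nat.pos_iff_ne_zero,
    Module.finrank_pos_iff_exists_ne_zero]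
  refine ⟨⟨_, const_mem_codeKernel_ghCode H 1⟩, fun h => ?_⟩
  exact one_ne_zero (Function.const_injective (congrArg Subtype.val h))

theorem ghCode_submatrix (H : Matrix ι ι F) {f : κ → ι} (hf : f.Surjective) (e : κ → ι) :
    ghCode (H.submatrix f e) = LinearMap.funLeft F F e '' ghCode H := by
  ext w
  constructor
  · rintro ⟨α, i, rfl⟩
    exact ⟨_, ⟨α, f i, rfl⟩, rfl⟩
  · rintro ⟨_, ⟨α, i, rfl⟩, rfl⟩
    obtain ⟨j, rfl⟩ := hf i
    exact ⟨α, j, rfl⟩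

theorem kerDim_ghCode_submatrix [Nonempty ι] (H : Matrix ι ι F) (e : κ ≃ ι) :
    kerDim (ghCode (H.submatrix e e)) = kerDim (ghCode H) := by
  rw [ghCode_submatrix H e.surjective, kerDim_image_of_injective
    (LinearMap.funLeft_injective_of_surjective F F e e.surjective) (ghCode_nonempty H),
    kerDim_eq_finrank_codeKernel]

end GHCode

namespace IsGH

variable {F ι κ : Type*} [Field F] [Fintype F] [DecidableEq F] [Fintype ι] [Fintype κ] {lam : ℕ}
  {H : Matrix ι ι F}

theorem equidistributed_sub (hH : IsGH lam H) {i j : ι} (hij : i ≠ j) :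
    Equidistributed lam (H i - H j) :=
  hH i j hij

theorem card_eq [Nontrivial ι] (hH : IsGH lam H) : Fintype.card ι = Fintype.card F * lam :=
  let ⟨_, _, hij⟩ := exists_pair_ne ι
  (hH.equidistributed_sub hij).card_eq

theorem submatrix (hH : IsGH lam H) {f : κ → ι} (hf : f.Injective) (e : κ ≃ ι) :
    IsGH lam (H.submatrix f e) := fun _ _ hij =>
  (hH.equidistributed_sub (hf.ne hij)).comp_equiv e

theorem sub_mem_range_const_or_equidistributed (hH : IsGH lam H) {c d : ι → F}
    (hc : c ∈ ghCode H) (hd : d ∈ ghCode H) :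
    c - d ∈ Set.range (Function.const ι) ∨ Equidistributed lam (c - d) := by
  obtain ⟨α, i, rfl⟩ := hc
  obtain ⟨β, j, rfl⟩ := hd
  rcases eq_or_ne i j with rfl | hij
  · exact Or.inl ⟨α - β, funext fun t => by simp⟩
  · refine Or.inr ?_
    convert (hH.equidistributed_sub hij).const_add (α - β) using 1
    ext t
    simp only [Pi.sub_apply, Pi.add_apply, Function.const_apply]
    ring

theorem card_ghCode [Nonempty ι] (hH : IsGH lam H) :
    Nat.card (ghCode H) = Fintype.card F * Fintype.card ι := by
  have hrange : ghCode H = Set.range fun x : F × ι => fun s => H x.2 s + x.1 := by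
    ext c
    exact ⟨fun ⟨α, i, h⟩ => ⟨(α, i), h.symm⟩, fun ⟨(α, i), h⟩ => ⟨α, i, h.symm⟩⟩
  have hinj : Function.Injective fun x : F × ι => fun s => H x.2 s + x.1 := by
    rintro ⟨α, i⟩ ⟨β, j⟩ h
    have hs (s : ι) : H i s + α = H j s + β := congrFun h s
    obtain rfl : i = j := by
      by_contra hij
      refine (hH.equidistributed_sub hij).notMem_range_const ⟨β - α, funext fun s => ?_⟩
      rw [Pi.sub_apply, Function.const_apply]
      linear_combination -hs s
    rw [add_left_cancel (hs i)]
  rw [hrange, Nat.card_range_of_injective hinj, Nat.card_eq_fintype_card, Fintype.card_prod]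

end IsGH

section KernelBound

variable {F ι : Type*} [Field F] [Fintype F] [DecidableEq F] [Fintype ι] {lam : ℕ}
  {H : Matrix ι ι F}

namespace IsGH

theorem mem_range_const_or_equidistributed_of_mem_codeKernel [Nonempty ι] (hH : IsGH lam H)
    {u : ι → F} (hu : u ∈ codeKernel F (ghCode H)) :
    u ∈ Set.range (Function.const ι) ∨ Equidistributed lam u := by
  obtain ⟨c, hc⟩ := ghCode_nonempty H
  simpa only [add_sub_cancel_right] using
    hH.sub_mem_range_const_or_equidistributed (add_mem_of_mem_codeKernel hu hc) hc

theorem equidistributed_add_of_notMem_codeKernel (hH : IsGH lam H) {c d u : ι → F}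
    (hc : c ∈ ghCode H) (hd : d ∈ ghCode H) (hcd : d - c ∉ codeKernel F (ghCode H))
    (hu : u ∈ codeKernel F (ghCode H)) : Equidistributed lam (d - c + u) := by
  have huc := hH.sub_mem_range_const_or_equidistributed (add_mem_of_mem_codeKernel hu hd) hc
  rw [show u + d - c = d - c + u by abel] at huc
  refine huc.resolve_left ?_
  rintro ⟨a, ha⟩
  refine hcd ?_
  rw [← add_sub_cancel_right (d - c) u, ← ha]
  exact sub_mem (const_mem_codeKernel_ghCode H a) hu

theorem pow_kerDim_dvd_card [Nonempty ι] (hH : IsGH lam H) {c d : ι → F} (hc : c ∈ ghCode H)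
    (hd : d ∈ ghCode H) (hcd : d - c ∉ codeKernel F (ghCode H)) :
    Fintype.card F ^ kerDim (ghCode H) ∣ Fintype.card ι := by
  classical
  let K := codeKernel F (ghCode H)
  let i := Classical.arbitrary ι
  -- The words of `K` vanishing at `i` form a complement in `K` of the constant words.
  let φ : K →ₗ[F] F := LinearMap.proj i ∘ₗ K.subtype
  have hφ : φ ≠ 0 := fun h =>
    one_ne_zero (LinearMap.congr_fun h ⟨_, const_mem_codeKernel_ghCode H 1⟩)
  have hnonzero (v : LinearMap.ker φ) (hv : v ≠ 0) : Equidistributed lam (v : ι → F) := by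
    refine (hH.mem_range_const_or_equidistributed_of_mem_codeKernel v.1.2).resolve_left ?_
    rintro ⟨a, ha⟩
    have ha0 : a = 0 := (congrFun ha i).trans (LinearMap.mem_ker.1 v.2)
    exact hv (Subtype.ext (Subtype.ext (by rw [← ha, ha0]; rfl)))
  have hdvd := card_mul_card_dvd_of_equidistributed (V := LinearMap.ker φ)
    (K.subtype ∘ₗ (LinearMap.ker φ).subtype) (d - c) hnonzero fun v =>
      hH.equidistributed_add_of_notMem_codeKernel hc hd hcd v.1.2
  have hcard := card_mul_card_fiber_of_ne_zero hφ 0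
  rw [← card_codeKernel_eq_pow_kerDim, Nat.card_eq_fintype_card, ← hcard, ← Fintype.card_subtype]
  convert hdvd
  exact LinearMap.mem_ker.symm

theorem pow_kerDim_eq_card_mul_card [Nonempty ι] (hH : IsGH lam H) {c : ι → F}
    (hc : c ∈ ghCode H) (hall : ∀ d ∈ ghCode H, d - c ∈ codeKernel F (ghCode H)) :
    Fintype.card F ^ kerDim (ghCode H) = Fintype.card F * Fintype.card ι := by
  have hcoset : ghCode H = c +ᵥ (codeKernel F (ghCode H) : Set (ι → F)) := by
    refine Set.Subset.antisymm (fun d hd => ⟨d - c, hall d hd, add_sub_cancel c d⟩) ?_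
    rintro _ ⟨u, hu, rfl⟩
    simpa only [vadd_eq_add, add_comm c] using add_mem_of_mem_codeKernel hu hc
  rw [← card_codeKernel_eq_pow_kerDim, ← hH.card_ghCode]
  conv_rhs => rw [hcoset]
  exact (Set.ncard_vadd_set c _).symm

theorem pow_kerDim_dvd_or_eq [Nonempty ι] (hH : IsGH lam H) :
    Fintype.card F ^ kerDim (ghCode H) ∣ Fintype.card ι ∨
      Fintype.card F ^ kerDim (ghCode H) = Fintype.card F * Fintype.card ι := by
  obtain ⟨c, hc⟩ := ghCode_nonempty H
  by_cases hall : ∀ d ∈ ghCode H, d - c ∈ codeKernel F (ghCode H)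
  · exact Or.inr (hH.pow_kerDim_eq_card_mul_card hc hall)
  · push Not at hall
    obtain ⟨d, hd, hcd⟩ := hall
    exact Or.inl (hH.pow_kerDim_dvd_card hc hd hcd)

theorem kerDim_le {s h : ℕ} (hH : IsGH lam H) (hs1 : s ≠ 1) (hs : ¬ Fintype.card F ∣ s)
    (hι : Fintype.card ι = Fintype.card F ^ h * s) : kerDim (ghCode H) ≤ h := by
  have hs0 : 0 < s := Nat.pos_of_ne_zero fun h0 => hs (h0 ▸ dvd_zero _)
  have : Nonempty ι := Fintype.card_pos_iff.1 (hι ▸ by positivity)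
  have hpow : 0 < Fintype.card F ^ h := by positivity
  by_contra! hlt
  obtain ⟨m, hm⟩ := Nat.exists_eq_add_of_lt hlt
  rcases hH.pow_kerDim_dvd_or_eq with hdvd | heq
  · rw [hι, hm, add_assoc, pow_add] at hdvd
    exact hs ((dvd_pow_self _ m.succ_ne_zero).trans (Nat.dvd_of_mul_dvd_mul_left hpow hdvd))
  · have hsm : Fintype.card F ^ m = s := by
      rw [hι, hm, ← mul_assoc, ← pow_succ', add_right_comm, pow_add] at heq
      exact Nat.eq_of_mul_eq_mul_left (by positivity) heq
    rcases m with _ | m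
    · exact hs1 (hsm.symm.trans (pow_zero _))
    · exact hs (hsm ▸ dvd_pow_self _ m.succ_ne_zero)

theorem four_dvd_card_of_card_eq_two (hH : IsGH lam H) (hF : Fintype.card F = 2)
    (hι : 2 < Fintype.card ι) : 4 ∣ Fintype.card ι := by
  obtain ⟨i, j, k, hij, hik, hjk⟩ := Fintype.two_lt_card_iff.1 hι
  have hdvd := card_mul_card_dvd_of_equidistributed (LinearMap.toSpanSingleton F _ (H i - H j))
    (H k - H i) (fun a ha => (hH.equidistributed_sub hij).const_smul ha) fun a => by
      rcases eq_or_ne a 0 with rfl | ha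
      · simpa using hH.equidistributed_sub hik.symm
      · obtain rfl : a = 1 := by simpa [hF] using FiniteField.pow_card_sub_one_eq_one a ha
        simpa using hH.equidistributed_sub hjk.symm
  simpa only [hF] using hdvd

theorem three_le_card_of_not_dvd [Nontrivial ι] (hH : IsGH lam H) (hlam : 2 ≤ lam)
    (hdvd : ¬ Fintype.card F ∣ lam) : 3 ≤ Fintype.card F := by
  have hF : 1 < Fintype.card F := Fintype.one_lt_card
  by_contra! hlt
  have hF2 : Fintype.card F = 2 := by omega
  have hfour := hH.four_dvd_card_of_card_eq_two hF2 (by rw [hH.card_eq, hF2]; omega)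
  rw [hH.card_eq, hF2] at hfour
  rw [hF2] at hdvd
  omega

theorem exists_columns_three_sub_ne (hH : IsGH lam H) (hF : 3 ≤ Fintype.card F)
    {r s t : ι} (hrs : r ≠ s) (hrt : r ≠ t) (hst : s ≠ t) (i : ι) :
    ∃ b, (H r - H s) b ≠ (H r - H s) i ∧ (H r - H t) b ≠ (H r - H t) i ∧
      (H s - H t) b ≠ (H s - H t) i := by
  classical
  have : Nontrivial ι := ⟨r, s, hrs⟩
  let A (v : ι → F) : Finset ι := {b | v b = v i}
  have hA {k l : ι} (hkl : k ≠ l) : #(A (H k - H l)) = lam := hH.equidistributed_sub hkl _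
  by_contra! hall
  have hcover : (univ : Finset ι) ⊆
      A (H r - H s) ∪ ((A (H r - H t)).erase i ∪ (A (H s - H t)).erase i) := by
    intro b _
    by_cases hb : b = i
    · simp [hb, A]
    · have := hall b
      simp only [mem_union, mem_erase, mem_filter_univ, A]
      tauto
  have hcard := card_univ (α := ι) ▸ (card_le_card hcover).trans ((card_union_le _ _).trans
    (Nat.add_le_add_left (card_union_le _ _) _))
  have hi (v : ι → F) : i ∈ A v := by simp [A]
  have hlam : 0 < lam := hA hrs ▸ card_pos.2 ⟨i, hi _⟩
  rw [card_erase_of_mem (hi _), card_erase_of_mem (hi _), hA hrs, hA hrt, hA hst, hH.card_eq]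
    at hcard
  have : 3 * lam ≤ Fintype.card F * lam := Nat.mul_le_mul_right _ hF
  omega

-- If the columns `i` and `b` are swapped and the code translated by `y`, then the difference of the
-- new and the old `k`-th row agrees with `y` outside `i` and `b`.
theorem exists_perm_not_vadd_subset (hH : IsGH lam H) (hF : 3 ≤ Fintype.card F) (hlam : 2 ≤ lam)
    (hι : 2 < Fintype.card ι) :
    ∃ σ : Equiv.Perm ι, ∀ y : ι → F, ¬ y +ᵥ ghCode H ⊆ ghCode (H.submatrix id σ) := by
  classical
  obtain ⟨r, s, t, hrs, hrt, hst⟩ := Fintype.two_lt_card_iff.1 hι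
  have : Nontrivial ι := ⟨r, s, hrs⟩
  have hn : lam + 2 < Fintype.card ι := by
    rw [hH.card_eq]
    nlinarith [Nat.mul_le_mul_right lam hF]
  let i := Classical.arbitrary ι
  obtain ⟨b, hb_rs, hb_rt, hb_st⟩ := hH.exists_columns_three_sub_ne hF hrs hrt hst i
  refine ⟨Equiv.swap i b, fun y hy => ?_⟩
  let w (k : ι) : ι → F := y + H k - H k ∘ Equiv.swap i b
  have hw (k : ι) : w k ∈ Set.range (Function.const ι) ∨ Equidistributed lam (w k) :=
    (hH.submatrix Function.injective_id (Equiv.swap i b)).sub_mem_range_const_or_equidistributed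
      (hy (Set.vadd_mem_vadd_set (row_mem_ghCode H k))) (row_mem_ghCode _ k)
  have hwy (k l : ι) : Set.EqOn (w k) (w l) {i, b}ᶜ := fun x hx => by
    simp only [Set.mem_compl_iff, Set.mem_insert_iff, Set.mem_singleton_iff, not_or] at hx
    simp [w, Equiv.swap_apply_of_ne_of_ne hx.1 hx.2]
  have hne {k l : ι} (hb : (H k - H l) b ≠ (H k - H l) i) : w k i ≠ w l i := fun h => by
    refine hb ?_
    simp only [w, Pi.sub_apply, Pi.add_apply, Function.comp_apply, Equiv.swap_apply_left] at h ⊢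
    linear_combination -h
  exact hne hb_st (apply_eq_of_eqOn_compl_pair hn (hwy r s) (hwy r t) (hw r) (hw s) (hw t)
    (hne hb_rs) (hne hb_rt))

end IsGH

end KernelBound

section KroneckerSum

variable {F κ : Type*} [Field F]

/-- The linear map sending `(i, y)` to the word of length `|F × κ|` whose block with index `j` is
`i * j + y`. It encodes the words of `S_q ⊕ [B_i]` as pairs of a row index `i` of `S_q` and a word
of `C_{B_i}`. -/
def blockWord (F κ : Type*) [Field F] : (F × (κ → F)) →ₗ[F] (F × κ → F) where
  toFun x t := x.1 * t.1 + x.2 t.2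
  map_add' x y := by
    ext t
    simp only [Prod.fst_add, Prod.snd_add, Pi.add_apply]
    ring
  map_smul' a x := by
    ext t
    simp only [Prod.smul_fst, Prod.smul_snd, Pi.smul_apply, smul_eq_mul, RingHom.id_apply]
    ring

theorem blockWord_injective [Nonempty κ] : Function.Injective (blockWord F κ) := by
  refine (injective_iff_map_eq_zero _).2 fun x hx => ?_
  have hx (t : F × κ) : x.1 * t.1 + x.2 t.2 = 0 := congrFun hx t
  have hsnd : x.2 = 0 := funext fun c => by simpa using hx (0, c)
  exact Prod.ext (by simpa [hsnd] using hx (1, Classical.arbitrary κ)) hsnd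

theorem ghCode_kroneckerSumFam_mulTable (B : F → Matrix κ κ F) :
    ghCode (kroneckerSumFam (mulTable F) B) = blockWord F κ '' {x | x.2 ∈ ghCode (B x.1)} := by
  ext w
  constructor
  · rintro ⟨α, ⟨i, r⟩, rfl⟩
    exact ⟨(i, fun s => B i r s + α), ⟨α, r, rfl⟩, funext fun t => (add_assoc _ _ _).symm⟩
  · rintro ⟨⟨i, c⟩, ⟨α, r, hc⟩, rfl⟩
    obtain rfl : c = fun s => B i r s + α := hc
    exact ⟨α, (i, r), funext fun t => (add_assoc _ _ _).symm⟩

theorem kerDim_ghCode_kroneckerSumFam_mulTable [Nonempty κ] (B : F → Matrix κ κ F) :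
    kerDim (ghCode (kroneckerSumFam (mulTable F) B)) =
      Module.finrank F (codeKernel F {x : F × (κ → F) | x.2 ∈ ghCode (B x.1)}) := by
  obtain ⟨c, hc⟩ := ghCode_nonempty (B 0)
  rw [ghCode_kroneckerSumFam_mulTable, kerDim_image_of_injective blockWord_injective ⟨(0, c), hc⟩]

theorem kerDim_ghCode_kroneckerSumFam_const [Finite κ] [Nonempty κ] (B : Matrix κ κ F) :
    kerDim (ghCode (kroneckerSumFam (mulTable F) fun _ => B)) = kerDim (ghCode B) + 1 := by
  have hkernel : codeKernel F {x : F × (κ → F) | x.2 ∈ ghCode B} =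
      LinearMap.range (LinearMap.id.prodMap (codeKernel F (ghCode B)).subtype) := by
    rw [LinearMap.range_prodMap, LinearMap.range_id, Submodule.range_subtype]
    ext x
    exact ⟨fun hx => ⟨trivial, fun α c hc => hx α (0, c) hc⟩, fun hx α c hc => hx.2 α c.2 hc⟩
  have hinj : Function.Injective
      ((LinearMap.id : F →ₗ[F] F).prodMap (codeKernel F (ghCode B)).subtype) :=
    Function.injective_id.prodMap Subtype.val_injective
  rw [kerDim_ghCode_kroneckerSumFam_mulTable, hkernel, LinearMap.finrank_range_of_inj hinj,
    Module.finrank_prod, Module.finrank_self, ← kerDim_eq_finrank_codeKernel, add_comm]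

theorem kerDim_ghCode_kroneckerSumFam_le [Finite κ] [Nonempty κ] {B : F → Matrix κ κ F}
    (hB : ∀ y : κ → F, ¬ y +ᵥ ghCode (B 0) ⊆ ghCode (B 1)) :
    kerDim (ghCode (kroneckerSumFam (mulTable F) B)) ≤ kerDim (ghCode (B 0)) := by
  have hkernel : codeKernel F {x : F × (κ → F) | x.2 ∈ ghCode (B x.1)} ≤
      (codeKernel F (ghCode (B 0))).map (LinearMap.inr F F (κ → F)) := by
    rintro ⟨i, y⟩ hx
    have hx (α : F) {c : κ → F} (hc : c ∈ ghCode (B 0)) : α • y + c ∈ ghCode (B (α * i)) := by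
      simpa using hx α (0, c) hc
    obtain rfl : i = 0 := by
      by_contra hi
      refine hB (i⁻¹ • y) ?_
      rintro _ ⟨c, hc, rfl⟩
      simpa [hi] using hx i⁻¹ hc
    exact ⟨y, fun α c hc => by simpa using hx α hc, rfl⟩
  rw [kerDim_ghCode_kroneckerSumFam_mulTable, kerDim_eq_finrank_codeKernel]
  exact (Submodule.finrank_mono hkernel).trans (Submodule.finrank_map_le _ _)

theorem IsGH.kroneckerSumFam_mulTable [Fintype F] [DecidableEq F] [Fintype κ] [Nontrivial κ]
    {lam : ℕ} {B : F → Matrix κ κ F} (hB : ∀ i, IsGH lam (B i)) :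
    IsGH (Fintype.card F * lam) (kroneckerSumFam (mulTable F) B) := by
  rintro ⟨i, r⟩ ⟨j, s⟩ hne a
  change #{t : F × κ | i * t.1 + B i r t.2 - (j * t.1 + B j s t.2) = a} = _
  by_cases hij : i = j
  · subst hij
    rw [← hB i r s (fun h => hne (by rw [h])) a, ← card_univ (α := F), ← card_product]
    congr 1
    ext t
    simp
  · have hij' : i - j ≠ 0 := sub_ne_zero.2 hij
    -- Each column `c` of the blocks contains the value `a` in exactly one block.
    have hsolve (t : F × κ) : i * t.1 + B i r t.2 - (j * t.1 + B j s t.2) = a ↔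
        t.1 = (a - (B i r t.2 - B j s t.2)) / (i - j) := by
      rw [eq_div_iff hij']
      constructor <;> intro h <;> linear_combination h
    rw [← (hB 0).card_eq, ← card_univ]
    refine card_bij' (fun t _ => t.2) (fun c _ => ((a - (B i r c - B j s c)) / (i - j), c))
      (fun _ _ => mem_univ _) (fun c _ => ?_) (fun t ht => ?_) fun _ _ => rfl
    · rw [mem_filter_univ, hsolve]
    · rw [mem_filter_univ, hsolve] at ht
      exact Prod.ext ht.symm rfl

end KroneckerSum

section Normalization

variable {F ι : Type*} [Field F]

/-- The normalization of `H` at `z`: the row `z` is subtracted from every row, and then from every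
row its entry in the column `z`. -/
def normalizeAt (H : Matrix ι ι F) (z : ι) : Matrix ι ι F := fun i t =>
  H i t - H z t - (H i z - H z z)

theorem ghCode_normalizeAt (H : Matrix ι ι F) (z : ι) :
    ghCode (normalizeAt H z) = -H z +ᵥ ghCode H := by
  ext w
  constructor
  · rintro ⟨α, i, rfl⟩
    refine ⟨_, ⟨α - (H i z - H z z), i, rfl⟩, funext fun t => ?_⟩
    simp only [normalizeAt, vadd_eq_add, Pi.add_apply, Pi.neg_apply]
    ring
  · rintro ⟨_, ⟨α, i, rfl⟩, rfl⟩
    refine ⟨α + (H i z - H z z), i, funext fun t => ?_⟩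
    simp only [normalizeAt, vadd_eq_add, Pi.add_apply, Pi.neg_apply]
    ring

theorem normalized_normalizeAt {n : ℕ} (H : Matrix (Fin (n + 1)) (Fin (n + 1)) F) :
    Normalized (normalizeAt H 0) := by
  rintro i t (h | h)
  · rw [Fin.val_eq_zero_iff.1 h, normalizeAt, sub_self, sub_self, sub_self]
  · rw [Fin.val_eq_zero_iff.1 h, normalizeAt, sub_self]

theorem isGH_normalizeAt [Fintype F] [DecidableEq F] [Fintype ι] {lam : ℕ} {H : Matrix ι ι F}
    (hH : IsGH lam H) (z : ι) : IsGH lam (normalizeAt H z) := fun i j hij => by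
  have hrow : Function.const ι (H j z - H i z) + (H i - H j) =
      normalizeAt H z i - normalizeAt H z j := by
    ext t
    simp only [normalizeAt, Pi.add_apply, Pi.sub_apply, Function.const_apply]
    ring
  have hrow_equi := (hH.equidistributed_sub hij).const_add (H j z - H i z)
  rw [hrow] at hrow_equi
  exact hrow_equi

end Normalization

section Existence

theorem nontrivial_fin_card_mul (F : Type*) [Fintype F] [Nontrivial F] {lam : ℕ} (hlam : 0 < lam) :
    Nontrivial (Fin (Fintype.card F * lam)) :=
  Fin.nontrivial_iff_two_le.2 (Fintype.one_lt_card.trans_le (Nat.le_mul_of_pos_right _ hlam))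

variable {F : Type*} [Field F] [Fintype F] [DecidableEq F]

variable (F) in
/-- Some normalized GH matrix `H(q, lam)` over `F` has a GH code with a kernel of dimension `k`. -/
def HasGHCode (lam k : ℕ) : Prop :=
  ∃ H : Matrix (Fin (Fintype.card F * lam)) (Fin (Fintype.card F * lam)) F,
    IsGH lam H ∧ Normalized H ∧ kerDim (ghCode H) = k

theorem IsGH.hasGHCode {ι : Type*} [Fintype ι] [Nontrivial ι] {lam : ℕ} {H : Matrix ι ι F}
    (hH : IsGH lam H) : HasGHCode F lam (kerDim (ghCode H)) := by
  obtain ⟨n, hn⟩ : ∃ n, Fintype.card F * lam = n + 1 :=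
    Nat.exists_eq_add_of_le' (hH.card_eq ▸ Fintype.card_pos)
  let e : Fin (n + 1) ≃ ι := (Fintype.equivFinOfCardEq (hH.card_eq.trans hn)).symm
  rw [HasGHCode, hn]
  exact ⟨normalizeAt (H.submatrix e e) 0, isGH_normalizeAt (hH.submatrix e.injective e) 0,
    normalized_normalizeAt _, by
      rw [ghCode_normalizeAt, kerDim_vadd, kerDim_ghCode_submatrix]⟩

namespace HasGHCode

variable {lam k : ℕ}

theorem card_mul_succ (hlam : 0 < lam) (h : HasGHCode F lam k) :
    HasGHCode F (Fintype.card F * lam) (k + 1) := by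
  obtain ⟨H, hH, -, rfl⟩ := h
  have := nontrivial_fin_card_mul F hlam
  rw [← kerDim_ghCode_kroneckerSumFam_const]
  exact (IsGH.kroneckerSumFam_mulTable fun _ => hH).hasGHCode

theorem card_mul_one (hF : 3 ≤ Fintype.card F) (hlam : 2 ≤ lam) (h : HasGHCode F lam 1) :
    HasGHCode F (Fintype.card F * lam) 1 := by
  obtain ⟨H, hH, -, hker⟩ := h
  have := nontrivial_fin_card_mul F (zero_lt_two.trans_le hlam)
  have hι : 2 < Fintype.card (Fin (Fintype.card F * lam)) := by
    rw [Fintype.card_fin]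
    nlinarith
  obtain ⟨σ, hσ⟩ := hH.exists_perm_not_vadd_subset hF hlam hι
  let B (i : F) := if i = 0 then H else H.submatrix id σ
  have hB (i : F) : IsGH lam (B i) := by
    by_cases hi : i = 0
    · simpa only [B, if_pos hi] using hH
    · simpa only [B, if_neg hi] using hH.submatrix Function.injective_id σ
  have hB0 : B 0 = H := if_pos rfl
  have hB1 : B 1 = H.submatrix id σ := if_neg one_ne_zero
  have hle := kerDim_ghCode_kroneckerSumFam_le (B := B) (by rwa [hB0, hB1])
  rw [hB0, hker] at hle
  rw [← hle.antisymm (one_le_kerDim_ghCode _)]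
  exact (IsGH.kroneckerSumFam_mulTable hB).hasGHCode

theorem pow_mul (hF : 3 ≤ Fintype.card F) (hlam : 2 ≤ lam) (h : HasGHCode F lam 1) {m : ℕ} :
    ∀ {k}, k ≤ m → HasGHCode F (Fintype.card F ^ m * lam) (k + 1) := by
  induction m with
  | zero =>
    rintro k hk
    simpa [Nat.le_zero.1 hk] using h
  | succ m ih =>
    have hle : 2 ≤ Fintype.card F ^ m * lam :=
      hlam.trans (Nat.le_mul_of_pos_left _ (by positivity))
    rw [pow_succ', mul_assoc]
    rintro (_ | k) hk
    · exact (ih m.zero_le).card_mul_one hF hle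
    · exact (ih (Nat.le_of_succ_le_succ hk)).card_mul_succ (zero_lt_two.trans_le hle)

end HasGHCode

end Existence

theorem stmt12_general {s h k : ℕ} {F : Type*} [Field F] [Fintype F] [DecidableEq F]
    (hs1 : s ≠ 1) (hs : ¬ Fintype.card F ∣ s) (hh : 1 ≤ h)
    (hex : ∃ H₀ : Matrix (Fin (Fintype.card F * s)) (Fin (Fintype.card F * s)) F, IsGH s H₀) :
    (∃ H : Matrix (Fin (Fintype.card F ^ h * s)) (Fin (Fintype.card F ^ h * s)) F,
        IsGH (Fintype.card F ^ (h - 1) * s) H ∧ Normalized H ∧ kerDim (ghCode H) = k) ↔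
      1 ≤ k ∧ k ≤ h := by
  have hs0 : s ≠ 0 := fun h0 => hs (h0 ▸ dvd_zero _)
  have hs2 : 2 ≤ s := by omega
  constructor
  · rintro ⟨H, hH, -, rfl⟩
    have : Nonempty (Fin (Fintype.card F ^ h * s)) := Fin.pos_iff_nonempty.1 (by positivity)
    exact ⟨one_le_kerDim_ghCode H, hH.kerDim_le hs1 hs (Fintype.card_fin _)⟩
  · rintro ⟨hk, hkh⟩
    obtain ⟨H₀, hH₀⟩ := hex
    have := nontrivial_fin_card_mul F (zero_lt_two.trans_le hs2)
    have hF := hH₀.three_le_card_of_not_dvd hs2 hs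
    have hone : kerDim (ghCode H₀) = 1 :=
      (hH₀.kerDim_le hs1 hs (by rw [Fintype.card_fin, pow_one])).antisymm (one_le_kerDim_ghCode H₀)
    obtain ⟨m, rfl⟩ := Nat.exists_eq_add_of_le' hh
    obtain ⟨k, rfl⟩ := Nat.exists_eq_add_of_le' hk
    rw [pow_succ', mul_assoc]
    exact (hone ▸ hH₀.hasGHCode).pow_mul hF hs2 (Nat.le_of_succ_le_succ hkh)

theorem stmt12 {p s h k : ℕ} {F : Type*} [Field F] [Fintype F] [DecidableEq F]
    (hcard : Fintype.card F = p) (hp : p.Prime)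
    (hs1 : s ≠ 1) (hs : ¬ p ∣ s) (hh : 2 ≤ h)
    (hex : ∃ H₀ : Matrix (Fin (p * s)) (Fin (p * s)) F, IsGH s H₀) :
    (∃ H : Matrix (Fin (p ^ h * s)) (Fin (p ^ h * s)) F,
        IsGH (p ^ (h - 1) * s) H ∧ Normalized H ∧ kerDim (ghCode H) = k) ↔
      1 ≤ k ∧ k ≤ h := by
  subst hcard
  exact stmt12_general hs1 hs (one_le_two.trans hh) hex
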